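/- (Generalization bound for LR-εNVC-R) Let λ > 0, let μ be a Borel probability measure on ℝ^p × ℝ supported in X × [0, D̄], let δ ∈ (0, 1), and let A : (ℝ^p × ℝ)^n → ℝ^p be a measurable map such that for μ^{⊗n}-almost every dataset S, A(S) is the minimizer over ℝ^p of R̂(θ; S) + λ·‖θ‖₂². Define the true risk R(θ) = ∫ L(s, ⟨x, θ⟩) dμ(x, s). Then, with probability at least 1 − δ over S drawn from μ^{⊗n}, R(A(S)) − R̂(A(S); S) ≤ (α ∨ (1 − α))²·X_max²·p/(n·λ) + 2·(α ∨ (1 − α))²·X_max²·(p/λ)·√(ln(2/δ)/(2n)) + (D̄ + ε₂)·(α ∨ (1 − α))·√(ln(2/δ)/(2n)). -/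

import Mathlib

open RealInnerProductSpace MeasureTheory

/-- The ε-insensitive newsvendor loss. -/
noncomputable def epsLoss (α ε₁ ε₂ s y : ℝ) : ℝ :=
  (1 - α) * max (y - s - ε₁) 0 + α * max (s + ε₂ - y) 0

/-- The empirical risk of `θ` on a dataset `S` of `n` feature/observation pairs. -/
noncomputable def empRisk (α ε₁ ε₂ : ℝ) {p n : ℕ}
    (S : Fin n → EuclideanSpace ℝ (Fin p) × ℝ) (θ : EuclideanSpace ℝ (Fin p)) : ℝ :=
  (1 / (n : ℝ)) * ∑ i, epsLoss α ε₁ ε₂ (S i).2 ⟪(S i).1, θ⟫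

/-- The true risk of `θ` under the data-generating distribution `μ`. -/
noncomputable def trueRisk (α ε₁ ε₂ : ℝ) {p : ℕ}
    (μ : Measure (EuclideanSpace ℝ (Fin p) × ℝ)) (θ : EuclideanSpace ℝ (Fin p)) : ℝ :=
  ∫ z, epsLoss α ε₁ ε₂ z.2 ⟪z.1, θ⟫ ∂μ

theorem measurable_finCons {Z : Type*} [MeasurableSpace Z] (n : ℕ) :
    Measurable fun q : Z × (Fin n → Z) => (Fin.cons q.1 q.2 : Fin (n + 1) → Z) := by
  refine measurable_pi_lambda _ fun i => ?_
  induction i using Fin.cases with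
  | zero => simpa using measurable_fst
  | succ i => simpa using! (measurable_pi_apply i).comp measurable_snd

theorem integrable_of_measurable_of_abs_le {Ω : Type*} [MeasurableSpace Ω] {ν : Measure Ω}
    [IsFiniteMeasure ν] {g : Ω → ℝ} (hg : Measurable g) {K : ℝ} (hK : ∀ ω, |g ω| ≤ K) :
    Integrable g ν :=
  Integrable.of_bound hg.aestronglyMeasurable K (.of_forall hK)

theorem abs_integral_le_of_abs_le {Ω : Type*} [MeasurableSpace Ω] {ν : Measure Ω}
    [IsProbabilityMeasure ν] {g : Ω → ℝ} {K : ℝ} (hK : ∀ ω, |g ω| ≤ K) :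
    |∫ ω, g ω ∂ν| ≤ K := by
  simpa using norm_integral_le_of_norm_le_const (μ := ν) (f := g) (.of_forall hK)

theorem integral_pi_fin_succ {Z : Type*} [MeasurableSpace Z] (μ : Measure Z)
    [IsProbabilityMeasure μ] {n : ℕ} {G : (Fin (n + 1) → Z) → ℝ} (hG : Measurable G)
    {K : ℝ} (hK : ∀ S, |G S| ≤ K) :
    ∫ S, G S ∂(Measure.pi fun _ : Fin (n + 1) => μ) =
      ∫ z, ∫ S, G (Fin.cons z S) ∂(Measure.pi fun _ : Fin n => μ) ∂μ := by
  have e := measurePreserving_piFinSuccAbove (fun _ : Fin (n + 1) => μ) 0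
  have h := e.integral_comp' (fun q : Z × (Fin n → Z) => G (Fin.cons q.1 q.2))
  rw [integral_prod (fun q : Z × (Fin n → Z) => G (Fin.cons q.1 q.2))
    (integrable_of_measurable_of_abs_le (hG.comp (measurable_finCons n)) fun q => hK _)] at h
  rw [← h]
  congr 1
  funext S
  congr 1
  exact (Fin.cons_self_tail S).symm

theorem integral_exp_le_of_range_le {Z : Type*} [MeasurableSpace Z] (μ : Measure Z)
    [IsProbabilityMeasure μ] {m : Z → ℝ} (hm : Measurable m) {K : ℝ} (hK : ∀ z, |m z| ≤ K)
    {C : ℝ} (hC : 0 ≤ C) (hmC : ∀ z w, m w ≤ m z + C) (s : ℝ) :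
    ∫ z, Real.exp (s * m z) ∂μ ≤ Real.exp (s * ∫ z, m z ∂μ + s ^ 2 * C ^ 2 / 8) := by
  have hne : Nonempty Z := μ.nonempty_of_neZero
  have hbdd : BddBelow (Set.range m) :=
    ⟨-K, by rintro _ ⟨z, rfl⟩; exact (abs_le.1 (hK z)).1⟩
  have hmem : ∀ z, m z ∈ Set.Icc (⨅ z, m z) ((⨅ z, m z) + C) := fun z =>
    ⟨ciInf_le hbdd z, by
      have := le_ciInf fun w => sub_le_iff_le_add.2 (hmC w z)
      linarith⟩
  have h := (ProbabilityTheory.hasSubgaussianMGF_of_mem_Icc (μ := μ) hm.aemeasurable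
    (.of_forall hmem)).mgf_le s
  simp only [ProbabilityTheory.mgf, mul_sub, Real.exp_sub, integral_div] at h
  rw [div_le_iff₀ (Real.exp_pos _), ← Real.exp_add] at h
  refine h.trans (Real.exp_le_exp.2 (le_of_eq ?_))
  simp [abs_of_nonneg hC]
  ring

/-- The exponential moment form of McDiarmid's bounded difference inequality. -/
theorem integral_exp_le_of_bounded_differences {Z : Type*} [MeasurableSpace Z] (μ : Measure Z)
    [IsProbabilityMeasure μ] {C : ℝ} (hC : 0 ≤ C) (s : ℝ) {n : ℕ} {G : (Fin n → Z) → ℝ}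
    (hG : Measurable G) {K : ℝ} (hK : ∀ S, |G S| ≤ K)
    (hdiff : ∀ S i z, G (Function.update S i z) ≤ G S + C) :
    ∫ S, Real.exp (s * G S) ∂(Measure.pi fun _ : Fin n => μ) ≤
      Real.exp (s * ∫ S, G S ∂(Measure.pi fun _ : Fin n => μ) + n * (s ^ 2 * C ^ 2 / 8)) := by
  induction n with
  | zero =>
    have h : ∀ S, G S = G Fin.elim0 := fun S => congrArg G (Subsingleton.elim _ _)
    simp [h]
  | succ n ih =>
    have hGc : Measurable fun q : Z × (Fin n → Z) => G (Fin.cons q.1 q.2) :=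
      hG.comp (measurable_finCons n)
    have hGz : ∀ z : Z, Measurable fun S : Fin n → Z => G (Fin.cons z S) := fun z =>
      hGc.comp measurable_prodMk_left
    have hexpK : ∀ S, |Real.exp (s * G S)| ≤ Real.exp (|s| * K) := fun S => by
      rw [Real.abs_exp]
      refine Real.exp_le_exp.2 ((le_abs_self _).trans ?_)
      rw [abs_mul]
      exact mul_le_mul_of_nonneg_left (hK S) (abs_nonneg s)
    set m : Z → ℝ := fun z => ∫ S, G (Fin.cons z S) ∂(Measure.pi fun _ : Fin n => μ) with hm
    have hmm : Measurable m := hGc.stronglyMeasurable.integral_prod_right.measurable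
    have hmK : ∀ z, |m z| ≤ K := fun z => abs_integral_le_of_abs_le fun S => hK _
    have hmC : ∀ z w, m w ≤ m z + C := fun z w => by
      have h := integral_mono (μ := Measure.pi fun _ : Fin n => μ)
        (integrable_of_measurable_of_abs_le (hGz w) fun S => hK _)
        ((integrable_of_measurable_of_abs_le (hGz z) fun S => hK _).add (integrable_const C))
        (fun S => by
          have := hdiff (Fin.cons z S) 0 w
          rwa [Fin.update_cons_zero] at this)
      simp only [Pi.add_apply] at h
      rwa [integral_add (integrable_of_measurable_of_abs_le (hGz z) fun S => hK _)
        (integrable_const C), integral_const, probReal_univ, one_smul] at h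
    rw [integral_pi_fin_succ μ ((hG.const_mul s).exp) hexpK, integral_pi_fin_succ μ hG hK]
    calc _ ≤ ∫ z, Real.exp (s * m z) * Real.exp (n * (s ^ 2 * C ^ 2 / 8)) ∂μ := by
          have hexpm : Measurable fun z => ∫ S, Real.exp (s * G (Fin.cons z S))
              ∂(Measure.pi fun _ : Fin n => μ) :=
            ((hGc.const_mul s).exp).stronglyMeasurable.integral_prod_right.measurable
          refine integral_mono
            (integrable_of_measurable_of_abs_le hexpm
              fun z => abs_integral_le_of_abs_le fun S => hexpK _)
            (Integrable.mul_const (integrable_of_measurable_of_abs_le (hmm.const_mul s).exp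
              (K := Real.exp (|s| * K)) fun z => ?_) _) fun z => ?_
          · rw [Real.abs_exp]
            refine Real.exp_le_exp.2 ((le_abs_self _).trans ?_)
            rw [abs_mul]
            exact mul_le_mul_of_nonneg_left (hmK z) (abs_nonneg s)
          · rw [← Real.exp_add]
            refine ih (hGz z) (fun S => hK _) fun S i w => ?_
            have := hdiff (Fin.cons z S) i.succ w
            rwa [← Fin.cons_update] at this
      _ ≤ Real.exp (s * ∫ z, m z ∂μ + s ^ 2 * C ^ 2 / 8) * Real.exp (n * (s ^ 2 * C ^ 2 / 8)) := by
          rw [integral_mul_const]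
          gcongr
          exact integral_exp_le_of_range_le μ hmm hmK hC hmC s
      _ = _ := by
          rw [← Real.exp_add]
          push_cast
          congr 1
          ring

/-- **McDiarmid's inequality** for an i.i.d. sample. -/
theorem measureReal_ge_le_of_bounded_differences {Z : Type*} [MeasurableSpace Z] (μ : Measure Z)
    [IsProbabilityMeasure μ] {C : ℝ} (hC : 0 < C) {n : ℕ} (hn : 0 < n) {G : (Fin n → Z) → ℝ}
    (hG : Measurable G) {K : ℝ} (hK : ∀ S, |G S| ≤ K)
    (hdiff : ∀ S i z, G (Function.update S i z) ≤ G S + C) {ε : ℝ} (hε : 0 ≤ ε) :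
    (Measure.pi fun _ : Fin n => μ).real
        {S | ∫ S, G S ∂(Measure.pi fun _ : Fin n => μ) + ε ≤ G S} ≤
      Real.exp (-(2 * ε ^ 2 / (n * C ^ 2))) := by
  have hn' : (0 : ℝ) < n := by exact_mod_cast hn
  set s : ℝ := 4 * ε / (n * C ^ 2) with hs
  have hs0 : 0 ≤ s := by positivity
  have hint : Integrable (fun S => Real.exp (s * G S)) (Measure.pi fun _ : Fin n => μ) := by
    refine integrable_of_measurable_of_abs_le (hG.const_mul s).exp (K := Real.exp (s * K))
      fun S => ?_
    rw [Real.abs_exp]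
    exact Real.exp_le_exp.2 (mul_le_mul_of_nonneg_left ((le_abs_self _).trans (hK S)) hs0)
  refine (ProbabilityTheory.measure_ge_le_exp_mul_mgf _ hs0 hint).trans ?_
  refine (mul_le_mul_of_nonneg_left
    (integral_exp_le_of_bounded_differences μ hC.le s hG hK hdiff) (Real.exp_pos _).le).trans ?_
  rw [← Real.exp_add]
  refine Real.exp_le_exp.2 (le_of_eq ?_)
  rw [hs]
  field_simp
  ring

theorem abs_ciSup_le_of_abs_le {T : Type*} [Finite T] [Nonempty T] {g : T → ℝ} {K : ℝ}
    (hK : ∀ t, |g t| ≤ K) : |⨆ t, g t| ≤ K := by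
  obtain ⟨t⟩ := ‹Nonempty T›
  exact abs_le.2 ⟨(abs_le.1 (hK t)).1.trans (le_ciSup (Set.finite_range g).bddAbove t),
    ciSup_le fun t => (abs_le.1 (hK t)).2⟩

/-- The one-coordinate comparison step of the Ledoux–Talagrand contraction principle. -/
theorem ciSup_add_ciSup_sub_le {T : Type*} [Finite T] [Nonempty T] (a : T → ℝ) {u v : T → ℝ}
    (huv : ∀ t t', |u t - u t'| ≤ |v t - v t'|) :
    (⨆ t, (a t + u t)) + ⨆ t, (a t - u t) ≤ (⨆ t, (a t + v t)) + ⨆ t, (a t - v t) := by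
  have hp : ∀ t, a t + v t ≤ ⨆ t, (a t + v t) := le_ciSup (Set.finite_range _).bddAbove
  have hm : ∀ t, a t - v t ≤ ⨆ t, (a t - v t) := le_ciSup (Set.finite_range _).bddAbove
  refine ciSup_add_ciSup_le fun t t' => ?_
  have h := (le_abs_self _).trans (huv t t')
  rcases abs_cases (v t - v t') with ⟨h', -⟩ | ⟨h', -⟩
  · linarith [hp t, hm t']
  · linarith [hp t', hm t]

theorem integral_ciSup_centered_le {Z T E : Type*} [MeasurableSpace Z] (μ : Measure Z)
    [IsProbabilityMeasure μ] [Finite T] [Nonempty T] [NormedAddCommGroup E]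
    [InnerProductSpace ℝ E] [MeasurableSpace E] [BorelSpace E] [SecondCountableTopology E]
    {f : T → Z → ℝ} (hf : ∀ t, Measurable (f t)) {C : ℝ} (hfC : ∀ t z, |f t z| ≤ C)
    {v : Z → E} (hv : Measurable v) {κ : ℝ} (hvκ : ∀ z, ‖v z‖ ≤ κ) {τ : T → E} {r : ℝ}
    (hτ : ∀ t, ‖τ t‖ ≤ r) (hfv : ∀ t t' z, |f t z - f t' z| ≤ |⟪v z, τ t - τ t'⟫|)
    {a : T → ℝ} {K : ℝ} (ha : ∀ t, |a t| ≤ K) :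
    ∫ z, ⨆ t, (a t + (∫ w, f t w ∂μ - f t z)) ∂μ ≤
      ∫ z, ((⨆ t, (a t + 2 * ⟪v z, τ t⟫)) + ⨆ t, (a t - 2 * ⟪v z, τ t⟫)) / 2 ∂μ := by
  have hfi : ∀ t, Integrable (f t) μ := fun t => integrable_of_measurable_of_abs_le (hf t) (hfC t)
  have hF : ∀ t, |∫ w, f t w ∂μ| ≤ C := fun t => abs_integral_le_of_abs_le (hfC t)
  have hin : ∀ z t, |⟪v z, τ t⟫| ≤ κ * r := fun z t =>
    (abs_real_inner_le_norm _ _).trans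
      (mul_le_mul (hvκ z) (hτ t) (norm_nonneg _) ((norm_nonneg _).trans (hvκ z)))
  have hi₀ : Integrable (fun z => ⨆ t, (a t + (∫ w, f t w ∂μ - f t z))) μ := by
    refine integrable_of_measurable_of_abs_le (.iSup fun t => ?_) (K := K + 2 * C)
      fun z => abs_ciSup_le_of_abs_le fun t => ?_
    · exact ((hf t).const_sub _).const_add _
    · have h₁ := abs_le.1 (ha t)
      have h₂ := abs_le.1 (hfC t z)
      have h₃ := abs_le.1 (hF t)
      exact abs_le.2 ⟨by linarith, by linarith⟩
  have hi₁ : Integrable (fun z => ⨆ t, (a t + 2 * f t z)) μ := by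
    refine integrable_of_measurable_of_abs_le (.iSup fun t => ?_) (K := K + 2 * C)
      fun z => abs_ciSup_le_of_abs_le fun t => ?_
    · exact ((hf t).const_mul _).const_add _
    · have h₁ := abs_le.1 (ha t)
      have h₂ := abs_le.1 (hfC t z)
      exact abs_le.2 ⟨by linarith, by linarith⟩
  have hi₂ : Integrable (fun z => ⨆ t, (a t - 2 * f t z)) μ := by
    refine integrable_of_measurable_of_abs_le (.iSup fun t => ?_) (K := K + 2 * C)
      fun z => abs_ciSup_le_of_abs_le fun t => ?_
    · exact ((hf t).const_mul _).const_sub _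
    · have h₁ := abs_le.1 (ha t)
      have h₂ := abs_le.1 (hfC t z)
      exact abs_le.2 ⟨by linarith, by linarith⟩
  have hmv : ∀ t, Measurable fun z => 2 * ⟪v z, τ t⟫ := fun t =>
    (hv.inner measurable_const).const_mul 2
  have hi₃ : Integrable (fun z => ⨆ t, (a t + 2 * ⟪v z, τ t⟫)) μ := by
    refine integrable_of_measurable_of_abs_le (.iSup fun t => (hmv t).const_add _)
      (K := K + 2 * (κ * r)) fun z => abs_ciSup_le_of_abs_le fun t => ?_
    have h₁ := abs_le.1 (ha t)
    have h₂ := abs_le.1 (hin z t)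
    exact abs_le.2 ⟨by linarith, by linarith⟩
  have hi₄ : Integrable (fun z => ⨆ t, (a t - 2 * ⟪v z, τ t⟫)) μ := by
    refine integrable_of_measurable_of_abs_le (.iSup fun t => (hmv t).const_sub _)
      (K := K + 2 * (κ * r)) fun z => abs_ciSup_le_of_abs_le fun t => ?_
    have h₁ := abs_le.1 (ha t)
    have h₂ := abs_le.1 (hin z t)
    exact abs_le.2 ⟨by linarith, by linarith⟩
  have hmean : ∀ t, a t + 2 * ∫ w, f t w ∂μ ≤ ∫ w, ⨆ t, (a t + 2 * f t w) ∂μ := fun t => by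
    have h := integral_mono ((integrable_const (a t)).add ((hfi t).const_mul 2)) hi₁ fun w =>
      le_ciSup (f := fun t => a t + 2 * f t w) (Set.finite_range _).bddAbove t
    simp only [Pi.add_apply] at h
    rwa [integral_add (integrable_const _) ((hfi t).const_mul 2), integral_const,
      probReal_univ, one_smul, integral_const_mul] at h
  calc ∫ z, ⨆ t, (a t + (∫ w, f t w ∂μ - f t z)) ∂μ
      ≤ ∫ z, ((∫ w, ⨆ t, (a t + 2 * f t w) ∂μ) + ⨆ t, (a t - 2 * f t z)) / 2 ∂μ := by
        refine integral_mono hi₀ (((integrable_const _).add hi₂).div_const 2) fun z =>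
          ciSup_le fun t => ?_
        have h := le_ciSup (f := fun t => a t - 2 * f t z) (Set.finite_range _).bddAbove t
        have h' := hmean t
        simp only at h ⊢
        linarith
    _ = ∫ z, ((⨆ t, (a t + 2 * f t z)) + ⨆ t, (a t - 2 * f t z)) / 2 ∂μ := by
        rw [integral_div, integral_div, integral_add (integrable_const _) hi₂,
          integral_add hi₁ hi₂, integral_const, probReal_univ, one_smul]
    _ ≤ _ := by
        refine integral_mono ((hi₁.add hi₂).div_const 2) ((hi₃.add hi₄).div_const 2) fun z => ?_
        refine div_le_div_of_nonneg_right (ciSup_add_ciSup_sub_le a fun t t' => ?_) two_pos.le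
        have h := hfv t t' z
        rw [inner_sub_right] at h
        rw [← mul_sub, ← mul_sub, abs_mul, abs_mul]
        exact mul_le_mul_of_nonneg_left h (abs_nonneg 2)

theorem sqrt_norm_add_sq_add_sqrt_norm_sub_sq_le {E : Type*} [NormedAddCommGroup E]
    [InnerProductSpace ℝ E] (w x : E) {c : ℝ} (hc : 0 ≤ c) :
    (√(‖w + x‖ ^ 2 + c) + √(‖w - x‖ ^ 2 + c)) / 2 ≤ √(‖w‖ ^ 2 + ‖x‖ ^ 2 + c) := by
  refine Real.le_sqrt_of_sq_le ?_
  have h₁ := Real.sq_sqrt (add_nonneg (sq_nonneg ‖w + x‖) hc)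
  have h₂ := Real.sq_sqrt (add_nonneg (sq_nonneg ‖w - x‖) hc)
  have h₃ := parallelogram_law_with_norm ℝ w x
  nlinarith [sq_nonneg (√(‖w + x‖ ^ 2 + c) - √(‖w - x‖ ^ 2 + c))]

/-- A uniform deviation bound in expectation for losses dominated by a linear class. -/
theorem integral_ciSup_inner_add_sum_le {Z T E : Type*} [MeasurableSpace Z] (μ : Measure Z)
    [IsProbabilityMeasure μ] [Finite T] [Nonempty T] [NormedAddCommGroup E]
    [InnerProductSpace ℝ E] [MeasurableSpace E] [BorelSpace E] [SecondCountableTopology E]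
    {f : T → Z → ℝ} (hf : ∀ t, Measurable (f t)) {C : ℝ} (hfC : ∀ t z, |f t z| ≤ C)
    {v : Z → E} (hv : Measurable v) {κ : ℝ} (hvκ : ∀ z, ‖v z‖ ≤ κ) {τ : T → E} {r : ℝ}
    (hr : 0 ≤ r) (hτ : ∀ t, ‖τ t‖ ≤ r)
    (hfv : ∀ t t' z, |f t z - f t' z| ≤ |⟪v z, τ t - τ t'⟫|) {n : ℕ} (w : E) :
    ∫ S, ⨆ t, (2 * ⟪w, τ t⟫ + ∑ i, (∫ y, f t y ∂μ - f t (S i)))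
        ∂(Measure.pi fun _ : Fin n => μ) ≤ 2 * r * √(‖w‖ ^ 2 + n * κ ^ 2) := by
  have hin : ∀ (x : E) t, |⟪x, τ t⟫| ≤ ‖x‖ * r := fun x t =>
    (abs_real_inner_le_norm _ _).trans (mul_le_mul_of_nonneg_left (hτ t) (norm_nonneg _))
  have hd : ∀ t z, |∫ y, f t y ∂μ - f t z| ≤ 2 * C := fun t z => by
    have h₁ := abs_le.1 (hfC t z)
    have h₂ := abs_le.1 (abs_integral_le_of_abs_le (ν := μ) (hfC t))
    exact abs_le.2 ⟨by linarith, by linarith⟩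
  have hsum : ∀ (m : ℕ) t (S : Fin m → Z), |∑ i, (∫ y, f t y ∂μ - f t (S i))| ≤ m * (2 * C) :=
    fun m t S => (Finset.abs_sum_le_sum_abs _ _).trans
      ((Finset.sum_le_sum fun i _ => hd t (S i)).trans_eq (by simp))
  have hbd : ∀ (m : ℕ) (x : E) t (S : Fin m → Z),
      |2 * ⟪x, τ t⟫ + ∑ i, (∫ y, f t y ∂μ - f t (S i))| ≤ 2 * (‖x‖ * r) + m * (2 * C) :=
    fun m x t S => (abs_add_le _ _).trans
      (add_le_add (by rw [abs_mul, abs_two]; linarith [hin x t]) (hsum m t S))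
  have hms : ∀ (m : ℕ) t, Measurable fun S : Fin m → Z => ∑ i, (∫ y, f t y ∂μ - f t (S i)) :=
    fun m t => Finset.measurable_sum _ fun i _ =>
      ((hf t).comp (measurable_pi_apply i)).const_sub _
  induction n generalizing w with
  | zero =>
    simp only [Finset.univ_eq_empty, Finset.sum_empty, add_zero, integral_const, probReal_univ,
      one_smul, CharP.cast_eq_zero, zero_mul, Real.sqrt_sq (norm_nonneg w)]
    refine ciSup_le fun t => ?_
    linarith [(le_abs_self _).trans (hin w t)]
  | succ n ih =>
    have hms2 : ∀ (x : Z → E), Measurable x → Measurable fun q : Z × (Fin n → Z) =>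
        ⨆ t, (2 * ⟪x q.1, τ t⟫ + ∑ i, (∫ y, f t y ∂μ - f t (q.2 i))) := fun x hx =>
      .iSup fun t => (((hx.comp measurable_fst).inner measurable_const).const_mul 2).add
        ((hms n t).comp measurable_snd)
    have hbd2 : ∀ (σ : ℝ), |σ| = 1 → ∀ z t (S : Fin n → Z),
        |2 * ⟪w + σ • v z, τ t⟫ + ∑ i, (∫ y, f t y ∂μ - f t (S i))| ≤
          2 * ((‖w‖ + κ) * r) + n * (2 * C) := fun σ hσ z t S => by
      refine (hbd n _ t S).trans ?_
      gcongr
      refine (norm_add_le _ _).trans ?_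
      rw [norm_smul, Real.norm_eq_abs, hσ, one_mul]
      gcongr
      exact hvκ z
    have hH : ∀ (σ : ℝ), |σ| = 1 → Integrable (fun q : Z × (Fin n → Z) =>
        ⨆ t, (2 * ⟪w + σ • v q.1, τ t⟫ + ∑ i, (∫ y, f t y ∂μ - f t (q.2 i))))
        (μ.prod (Measure.pi fun _ : Fin n => μ)) := fun σ hσ =>
      integrable_of_measurable_of_abs_le (hms2 _ ((hv.const_smul σ).const_add w))
        fun q => abs_ciSup_le_of_abs_le fun t => hbd2 σ hσ q.1 t q.2
    have hplus := hH 1 (by simp)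
    have hminus := hH (-1) (by simp)
    have hG : Measurable fun S : Fin (n + 1) → Z =>
        ⨆ t, (2 * ⟪w, τ t⟫ + ∑ i, (∫ y, f t y ∂μ - f t (S i))) :=
      .iSup fun t => (hms (n + 1) t).const_add _
    have hGK : ∀ S : Fin (n + 1) → Z,
        |⨆ t, (2 * ⟪w, τ t⟫ + ∑ i, (∫ y, f t y ∂μ - f t (S i)))| ≤
          2 * (‖w‖ * r) + (n + 1 : ℕ) * (2 * C) :=
      fun S => abs_ciSup_le_of_abs_le fun t => hbd _ w t S
    have hGq : Integrable (fun q : Z × (Fin n → Z) => ⨆ t, ((2 * ⟪w, τ t⟫ +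
        ∑ i, (∫ y, f t y ∂μ - f t (q.2 i))) + (∫ y, f t y ∂μ - f t q.1)))
        (μ.prod (Measure.pi fun _ : Fin n => μ)) := by
      refine integrable_of_measurable_of_abs_le (.iSup fun t => ?_)
        (K := 2 * (‖w‖ * r) + n * (2 * C) + 2 * C) fun q => abs_ciSup_le_of_abs_le fun t => ?_
      · exact (((hms n t).comp measurable_snd).const_add _).add
          (((hf t).comp measurable_fst).const_sub _)
      · exact (abs_add_le _ _).trans (add_le_add (hbd n w t q.2) (hd t q.1))
    rw [integral_pi_fin_succ μ hG hGK]
    simp only [Fin.sum_univ_succ, Fin.cons_zero, Fin.cons_succ]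
    calc ∫ z, ∫ S, ⨆ t, (2 * ⟪w, τ t⟫ + ((∫ y, f t y ∂μ - f t z) +
            ∑ i, (∫ y, f t y ∂μ - f t (S i)))) ∂(Measure.pi fun _ : Fin n => μ) ∂μ
        = ∫ S, ∫ z, ⨆ t, ((2 * ⟪w, τ t⟫ + ∑ i, (∫ y, f t y ∂μ - f t (S i))) +
            (∫ y, f t y ∂μ - f t z)) ∂μ ∂(Measure.pi fun _ : Fin n => μ) := by
          refine Eq.trans ?_ (integral_integral_swap hGq)
          simp only [add_comm, add_left_comm]
      _ ≤ ∫ S, ∫ z, ((⨆ t, (2 * ⟪w + (1 : ℝ) • v z, τ t⟫ +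
            ∑ i, (∫ y, f t y ∂μ - f t (S i)))) +
            ⨆ t, (2 * ⟪w + (-1 : ℝ) • v z, τ t⟫ + ∑ i, (∫ y, f t y ∂μ - f t (S i)))) / 2
            ∂μ ∂(Measure.pi fun _ : Fin n => μ) := by
          refine integral_mono hGq.integral_prod_right
            ((hplus.add hminus).div_const 2).integral_prod_right fun S => ?_
          refine (integral_ciSup_centered_le μ hf hfC hv hvκ hτ hfv
            fun t => hbd n w t S).trans_eq ?_
          simp only [inner_add_left, inner_smul_left]
          refine integral_congr_ae (.of_forall fun z => ?_)
          simp only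
          congr 3 <;> funext t <;> simp <;> ring
      _ = ∫ z, ∫ S, ((⨆ t, (2 * ⟪w + (1 : ℝ) • v z, τ t⟫ +
            ∑ i, (∫ y, f t y ∂μ - f t (S i)))) +
            ⨆ t, (2 * ⟪w + (-1 : ℝ) • v z, τ t⟫ + ∑ i, (∫ y, f t y ∂μ - f t (S i)))) / 2
            ∂(Measure.pi fun _ : Fin n => μ) ∂μ :=
          (integral_integral_swap ((hplus.add hminus).div_const 2)).symm
      _ ≤ ∫ _, 2 * r * √(‖w‖ ^ 2 + (n + 1 : ℕ) * κ ^ 2) ∂μ := by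
          refine integral_mono ((hplus.add hminus).div_const 2).integral_prod_left
            (integrable_const _) fun z => ?_
          have hip : ∀ σ : ℝ, |σ| = 1 → Integrable (fun S : Fin n → Z =>
              ⨆ t, (2 * ⟪w + σ • v z, τ t⟫ + ∑ i, (∫ y, f t y ∂μ - f t (S i))))
              (Measure.pi fun _ : Fin n => μ) := fun σ hσ =>
            integrable_of_measurable_of_abs_le (.iSup fun t => (hms n t).const_add _)
              fun S => abs_ciSup_le_of_abs_le fun t => hbd2 σ hσ z t S
          simp only
          rw [integral_div, integral_add (hip 1 (by simp)) (hip (-1) (by simp))]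
          have h₁ := ih (w + (1 : ℝ) • v z)
          have h₂ := ih (w + (-1 : ℝ) • v z)
          have h₃ := sqrt_norm_add_sq_add_sqrt_norm_sub_sq_le w (v z)
            (c := n * κ ^ 2) (by positivity)
          have h₄ : √(‖w‖ ^ 2 + ‖v z‖ ^ 2 + n * κ ^ 2) ≤ √(‖w‖ ^ 2 + (n + 1 : ℕ) * κ ^ 2) := by
            refine Real.sqrt_le_sqrt ?_
            have := pow_le_pow_left₀ (norm_nonneg _) (hvκ z) 2
            push_cast
            linarith
          rw [one_smul] at h₁ ⊢
          rw [neg_one_smul, ← sub_eq_add_neg] at h₂ ⊢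
          have h₅ := mul_le_mul_of_nonneg_left (h₃.trans h₄) hr
          linarith
      _ = _ := by simp

/-- High-probability uniform deviation bound for losses dominated by a linear class. -/
theorem measureReal_ciSup_sum_ge_le {Z T E : Type*} [MeasurableSpace Z] (μ : Measure Z)
    [IsProbabilityMeasure μ] [Finite T] [Nonempty T] [NormedAddCommGroup E]
    [InnerProductSpace ℝ E] [MeasurableSpace E] [BorelSpace E] [SecondCountableTopology E]
    {f : T → Z → ℝ} (hf : ∀ t, Measurable (f t)) {C : ℝ} (hC : 0 < C)
    (hfC : ∀ t z, f t z ∈ Set.Icc 0 C) {v : Z → E} (hv : Measurable v) {κ : ℝ} (hκ : 0 ≤ κ)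
    (hvκ : ∀ z, ‖v z‖ ≤ κ) {τ : T → E} {r : ℝ} (hr : 0 ≤ r) (hτ : ∀ t, ‖τ t‖ ≤ r)
    (hfv : ∀ t t' z, |f t z - f t' z| ≤ |⟪v z, τ t - τ t'⟫|) {n : ℕ} (hn : 0 < n)
    {ε : ℝ} (hε : 0 ≤ ε) :
    (Measure.pi fun _ : Fin n => μ).real
        {S | 2 * r * (√n * κ) + ε ≤ ⨆ t, ∑ i, (∫ y, f t y ∂μ - f t (S i))} ≤
      Real.exp (-(2 * ε ^ 2 / (n * C ^ 2))) := by
  have hfC' : ∀ t z, |f t z| ≤ C := fun t z =>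
    abs_le.2 ⟨by linarith [(hfC t z).1], (hfC t z).2⟩
  have hsum : ∀ t (S : Fin n → Z), |∑ i, (∫ y, f t y ∂μ - f t (S i))| ≤ n * (2 * C) :=
    fun t S => (Finset.abs_sum_le_sum_abs _ _).trans
      ((Finset.sum_le_sum fun i _ => show _ ≤ 2 * C by
        have h₁ := abs_le.1 (hfC' t (S i))
        have h₂ := abs_le.1 (abs_integral_le_of_abs_le (ν := μ) (hfC' t))
        exact abs_le.2 ⟨by linarith, by linarith⟩).trans_eq (by simp))
  have hG : Measurable fun S : Fin n → Z => ⨆ t, ∑ i, (∫ y, f t y ∂μ - f t (S i)) :=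
    .iSup fun t => Finset.measurable_sum _ fun i _ =>
      ((hf t).comp (measurable_pi_apply i)).const_sub _
  have hmean := integral_ciSup_inner_add_sum_le μ hf hfC' hv hvκ hr hτ hfv (n := n) 0
  simp only [inner_zero_left, mul_zero, zero_add, norm_zero, ne_eq, OfNat.ofNat_ne_zero,
    not_false_eq_true, zero_pow] at hmean
  rw [Real.sqrt_mul (Nat.cast_nonneg n), Real.sqrt_sq hκ] at hmean
  refine (measureReal_mono fun S hS => ?_).trans
    (measureReal_ge_le_of_bounded_differences μ hC hn hG
      (fun S => abs_ciSup_le_of_abs_le fun t => hsum t S) (fun S i z => ?_) hε)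
  · exact (add_le_add_left hmean ε).trans hS
  · refine ciSup_le fun t => ?_
    have hle := le_ciSup (f := fun t => ∑ j, (∫ y, f t y ∂μ - f t (S j)))
      (Set.finite_range _).bddAbove t
    have hdiff : ∑ j, ((∫ y, f t y ∂μ - f t (Function.update S i z j)) -
        (∫ y, f t y ∂μ - f t (S j))) = f t (S i) - f t z := by
      rw [Finset.sum_eq_single i (fun j _ hj => by simp [hj]) (by simp)]
      simp
    rw [Finset.sum_sub_distrib] at hdiff
    have h₁ := hfC t (S i)
    have h₂ := hfC t z
    linarith [h₁.2, h₂.1]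

theorem norm_le_of_isMin_add_sq {E : Type*} [NormedAddCommGroup E] [NormedSpace ℝ E]
    {g : E → ℝ} {L lam : ℝ} (hL : 0 ≤ L) (hlam : 0 < lam)
    (hg : ∀ θ θ', |g θ - g θ'| ≤ L * ‖θ - θ'‖) {a : E}
    (ha : ∀ θ, g a + lam * ‖a‖ ^ 2 ≤ g θ + lam * ‖θ‖ ^ 2) : ‖a‖ ≤ L / (2 * lam) := by
  by_contra! h
  set ρ := L / (2 * lam) with hρ
  have hρ0 : 0 ≤ ρ := by positivity
  have ha0 : 0 < ‖a‖ := hρ0.trans_lt h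
  have hLρ : L = 2 * lam * ρ := by rw [hρ]; field_simp
  have hn₁ : ‖(ρ / ‖a‖) • a‖ = ρ := by
    rw [norm_smul, Real.norm_of_nonneg (by positivity)]
    field_simp
  have hn₂ : ‖(ρ / ‖a‖) • a - a‖ = ‖a‖ - ρ := by
    have : (ρ / ‖a‖) • a - a = (-(1 - ρ / ‖a‖)) • a := by module
    rw [this, norm_smul, norm_neg, Real.norm_of_nonneg (by
      rw [sub_nonneg, div_le_one ha0]; exact h.le)]
    field_simp
  have h₁ := (le_abs_self _).trans (hg ((ρ / ‖a‖) • a) a)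
  have h₂ := ha ((ρ / ‖a‖) • a)
  rw [hn₂, hLρ] at h₁
  rw [hn₁] at h₂
  nlinarith [mul_pos hlam (pow_pos (sub_pos.2 h) 2)]

theorem epsLoss_nonneg {α : ℝ} (hα₀ : 0 ≤ α) (hα₁ : α ≤ 1) (ε₁ ε₂ s y : ℝ) :
    0 ≤ epsLoss α ε₁ ε₂ s y :=
  add_nonneg (mul_nonneg (sub_nonneg.2 hα₁) (le_max_right _ _))
    (mul_nonneg hα₀ (le_max_right _ _))

theorem abs_epsLoss_sub_le {α ε₁ ε₂ : ℝ} (hα₀ : 0 ≤ α) (hα₁ : α ≤ 1) (s y y' : ℝ) :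
    |epsLoss α ε₁ ε₂ s y - epsLoss α ε₁ ε₂ s y'| ≤ (α ⊔ (1 - α)) * |y - y'| := by
  have key : ∀ y y', y ≤ y' →
      |epsLoss α ε₁ ε₂ s y - epsLoss α ε₁ ε₂ s y'| ≤ (α ⊔ (1 - α)) * |y - y'| := by
    intro y y' h
    have hM₁ := mul_le_mul_of_nonneg_right (le_max_left α (1 - α)) (sub_nonneg.2 h)
    have hM₂ := mul_le_mul_of_nonneg_right (le_max_right α (1 - α)) (sub_nonneg.2 h)
    rw [abs_sub_comm y, abs_of_nonneg (sub_nonneg.2 h)]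
    have hup : max (y' - s - ε₁) 0 - max (y - s - ε₁) 0 ∈ Set.Icc 0 (y' - y) := by
      rcases max_cases (y' - s - ε₁) 0 with h₁ | h₁ <;>
        rcases max_cases (y - s - ε₁) 0 with h₂ | h₂ <;> constructor <;> linarith
    have hdown : max (s + ε₂ - y) 0 - max (s + ε₂ - y') 0 ∈ Set.Icc 0 (y' - y) := by
      rcases max_cases (s + ε₂ - y') 0 with h₁ | h₁ <;>
        rcases max_cases (s + ε₂ - y) 0 with h₂ | h₂ <;> constructor <;> linarith
    have e₁ := mul_le_mul_of_nonneg_left hup.2 (sub_nonneg.2 hα₁)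
    have e₂ := mul_nonneg (sub_nonneg.2 hα₁) hup.1
    have e₃ := mul_le_mul_of_nonneg_left hdown.2 hα₀
    have e₄ := mul_nonneg hα₀ hdown.1
    unfold epsLoss
    exact abs_le.2 ⟨by linarith, by linarith⟩
  rcases le_total y y' with h | h
  · exact key y y' h
  · rw [abs_sub_comm, abs_sub_comm y]
    exact key y' y h

theorem epsLoss_le {α ε₁ ε₂ D s : ℝ} (hα₀ : 0 ≤ α) (hα₁ : α ≤ 1) (hε : ε₂ ≤ ε₁)
    (hε₂ : 0 ≤ ε₂) (hs : s ∈ Set.Icc 0 D) (y : ℝ) :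
    epsLoss α ε₁ ε₂ s y ≤ (α ⊔ (1 - α)) * (D + ε₂) + (α ⊔ (1 - α)) * |y| := by
  have h₁ := (le_abs_self _).trans (abs_epsLoss_sub_le (ε₁ := ε₁) (ε₂ := ε₂) hα₀ hα₁ s y 0)
  have h₂ : epsLoss α ε₁ ε₂ s 0 = α * (s + ε₂) := by
    unfold epsLoss
    rw [max_eq_right (by linarith [hs.1]), max_eq_left (by linarith [hs.1])]
    ring
  have h₃ : α * (s + ε₂) ≤ (α ⊔ (1 - α)) * (D + ε₂) :=
    mul_le_mul (le_max_left _ _) (by linarith [hs.2]) (by linarith [hs.1])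
      (hα₀.trans (le_max_left _ _))
  rw [sub_zero] at h₁
  linarith

theorem abs_epsLoss_inner_sub_le {p : ℕ} {α ε₁ ε₂ κ : ℝ} (hα₀ : 0 ≤ α) (hα₁ : α ≤ 1)
    (s : ℝ) {x : EuclideanSpace ℝ (Fin p)} (hx : ‖x‖ ≤ κ)
    (θ θ' : EuclideanSpace ℝ (Fin p)) :
    |epsLoss α ε₁ ε₂ s ⟪x, θ⟫ - epsLoss α ε₁ ε₂ s ⟪x, θ'⟫| ≤
      (α ⊔ (1 - α)) * κ * ‖θ - θ'‖ := by
  refine (abs_epsLoss_sub_le hα₀ hα₁ _ _ _).trans ?_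
  rw [← inner_sub_right, mul_assoc]
  exact mul_le_mul_of_nonneg_left ((abs_real_inner_le_norm _ _).trans (by gcongr))
    (hα₀.trans (le_max_left _ _))

theorem abs_empRisk_sub_le {p n : ℕ} (hn : 0 < n) {α ε₁ ε₂ κ : ℝ} (hα₀ : 0 ≤ α) (hα₁ : α ≤ 1)
    {S : Fin n → EuclideanSpace ℝ (Fin p) × ℝ} (hS : ∀ i, ‖(S i).1‖ ≤ κ)
    (θ θ' : EuclideanSpace ℝ (Fin p)) :
    |empRisk α ε₁ ε₂ S θ - empRisk α ε₁ ε₂ S θ'| ≤ (α ⊔ (1 - α)) * κ * ‖θ - θ'‖ := by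
  have hn' : (0 : ℝ) < n := by exact_mod_cast hn
  unfold empRisk
  rw [← mul_sub, ← Finset.sum_sub_distrib, abs_mul, abs_of_pos (by positivity),
    one_div_mul_eq_div, div_le_iff₀' hn']
  refine (Finset.abs_sum_le_sum_abs _ _).trans ((Finset.sum_le_sum fun i _ =>
    abs_epsLoss_inner_sub_le hα₀ hα₁ _ (hS i) θ θ').trans_eq (by simp))

theorem continuous_epsLoss (α ε₁ ε₂ : ℝ) :
    Continuous fun q : ℝ × ℝ => epsLoss α ε₁ ε₂ q.1 q.2 := by
  unfold epsLoss
  fun_prop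

theorem inv_sqrt_add_half_sqrt_log_le {δ : ℝ} (hδ : δ ∈ Set.Ioo (0 : ℝ) 1) {n : ℕ} (hn : 0 < n) :
    1 / √n + √(Real.log (1 / δ) / (2 * n)) / 2 ≤ 2 * √(Real.log (2 / δ) / (2 * n)) := by
  have hn' : (0 : ℝ) < n := by exact_mod_cast hn
  have hlog : 0 ≤ Real.log (1 / δ) := Real.log_nonneg ((one_le_div hδ.1).2 hδ.2.le)
  have hsplit : Real.log (2 / δ) = Real.log 2 + Real.log (1 / δ) := by
    rw [← Real.log_mul two_ne_zero (one_div_pos.2 hδ.1).ne']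
    ring_nf
  have h₁ := Real.sq_sqrt (show 0 ≤ Real.log (1 / δ) / (2 * n) by positivity)
  have h₂ : √(Real.log (2 / δ) / (2 * n)) ^ 2 =
      Real.log 2 / 2 * (1 / √n) ^ 2 + √(Real.log (1 / δ) / (2 * n)) ^ 2 := by
    rw [h₁, Real.sq_sqrt (by rw [hsplit]; positivity), hsplit, div_pow, Real.sq_sqrt hn'.le]
    field_simp
  have hq := mul_le_mul_of_nonneg_right Real.log_two_gt_d9.le (sq_nonneg (1 / √(n : ℝ)))
  refine le_of_sq_le_sq ?_ (by positivity)
  nlinarith [sq_nonneg (1 / √(n : ℝ) - 2 * √(Real.log (1 / δ) / (2 * n)))]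

/-- Generalization bound for LR-εNVC-R: with probability at least `1 − δ` over an
i.i.d. sample `S ~ μ^{⊗n}`, the regularized empirical risk minimizer `A(S)` satisfies
`R(A(S)) − R̂(A(S); S) ≤ (α∨(1−α))²·X_max²·p/(n·lam)
  + 2·(α∨(1−α))²·X_max²·(p/lam)·√(ln(2/δ)/(2n)) + (D̄+ε₂)·(α∨(1−α))·√(ln(2/δ)/(2n))`. -/
theorem LR_eNVC_R_generalization_bound
    (α ε₁ ε₂ D Xmax lam : ℝ) (hα₀ : 0 < α) (hα₁ : α < 1) (hε : ε₁ > ε₂) (hε₂ : 0 ≤ ε₂)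
    (hD : 0 < D) (hXmax : 0 < Xmax) (hlam : 0 < lam)
    (p : ℕ) (hp : 1 ≤ p) (X : Set (EuclideanSpace ℝ (Fin p)))
    (hX : ∀ x ∈ X, x ⟨0, by omega⟩ = 1 ∧ ‖x‖ ≤ Xmax * Real.sqrt p)
    (n : ℕ) (hn : 0 < n)
    (μ : Measure (EuclideanSpace ℝ (Fin p) × ℝ)) [IsProbabilityMeasure μ]
    (hsupp : μ ((X ×ˢ Set.Icc (0 : ℝ) D)ᶜ) = 0)
    (δ : ℝ) (hδ : δ ∈ Set.Ioo (0 : ℝ) 1)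
    (A : (Fin n → EuclideanSpace ℝ (Fin p) × ℝ) → EuclideanSpace ℝ (Fin p))
    (hA : Measurable A)
    (hAmin : ∀ᵐ S ∂(Measure.pi fun _ : Fin n => μ),
      ∀ θ : EuclideanSpace ℝ (Fin p),
        empRisk α ε₁ ε₂ S (A S) + lam * ‖A S‖ ^ 2 ≤ empRisk α ε₁ ε₂ S θ + lam * ‖θ‖ ^ 2) :
    ENNReal.ofReal (1 - δ) ≤
      (Measure.pi fun _ : Fin n => μ)
        {S | trueRisk α ε₁ ε₂ μ (A S) - empRisk α ε₁ ε₂ S (A S) ≤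
            (α ⊔ (1 - α)) ^ 2 * Xmax ^ 2 * p / (n * lam) +
              2 * (α ⊔ (1 - α)) ^ 2 * Xmax ^ 2 * (p / lam) *
                Real.sqrt (Real.log (2 / δ) / (2 * n)) +
              (D + ε₂) * (α ⊔ (1 - α)) * Real.sqrt (Real.log (2 / δ) / (2 * n))} := by
  have hε' : ε₂ ≤ ε₁ := hε.le
  set M : ℝ := α ⊔ (1 - α) with hM
  have hM0 : 0 < M := hα₀.trans_le (le_max_left _ _)
  have hn' : (0 : ℝ) < n := by exact_mod_cast hn
  have hp' : (0 : ℝ) < p := by exact_mod_cast hp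
  set κ : ℝ := Xmax * √p with hκ
  have hκ0 : 0 < κ := by positivity
  have hκsq : κ ^ 2 = Xmax ^ 2 * p := by rw [hκ, mul_pow, Real.sq_sqrt hp'.le]
  set r : ℝ := M * κ / (2 * lam) with hr
  have hr0 : 0 < r := by positivity
  set η : ℝ := κ * M / (2 * n * lam) with hη
  have hη0 : 0 < η := by positivity
  obtain ⟨N, hNr, hNfin, hNcov⟩ := finite_cover_balls_of_compact
    (isCompact_closedBall (0 : EuclideanSpace ℝ (Fin p)) r) hη0
  have : Finite N := hNfin
  have hnet : ∀ θ : EuclideanSpace ℝ (Fin p), ‖θ‖ ≤ r → ∃ t : N, ‖θ - t‖ ≤ η := fun θ hθ => by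
    obtain ⟨t, ht, hθt⟩ := Set.mem_iUnion₂.1 (hNcov (mem_closedBall_zero_iff.2 hθ))
    exact ⟨⟨t, ht⟩, (mem_ball_iff_norm.1 hθt).le⟩
  have : Nonempty N := ⟨(hnet 0 (by simpa using hr0.le)).choose⟩
  -- `c` forces a sample point into the support constraints, and is a.e. the identity.
  let c : EuclideanSpace ℝ (Fin p) × ℝ → EuclideanSpace ℝ (Fin p) × ℝ := fun z =>
    (if ‖z.1‖ ≤ κ then z.1 else 0, max 0 (min z.2 D))
  have hc₁ : Measurable fun z => (c z).1 :=
    Measurable.ite (measurableSet_le measurable_fst.norm measurable_const)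
      measurable_fst measurable_const
  have hc₂ : Measurable fun z => (c z).2 :=
    measurable_const.max (measurable_snd.min measurable_const)
  have hcκ : ∀ z, ‖(c z).1‖ ≤ κ := fun z => by
    by_cases h : ‖z.1‖ ≤ κ <;> simp [c, h, hκ0.le]
  have hcD : ∀ z, (c z).2 ∈ Set.Icc 0 D := fun z =>
    ⟨le_max_left _ _, max_le hD.le (min_le_right _ _)⟩
  have hsupp' : ∀ᵐ z ∂μ, ‖z.1‖ ≤ κ ∧ c z = z := by
    filter_upwards [mem_ae_iff.2 hsupp] with z hz
    have h := (hX z.1 hz.1).2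
    refine ⟨h, Prod.ext (if_pos h) ?_⟩
    change max 0 (min z.2 D) = z.2
    rw [min_eq_left hz.2.2, max_eq_right hz.2.1]
  have hsuppS : ∀ᵐ S ∂(Measure.pi fun _ : Fin n => μ), ∀ i, ‖(S i).1‖ ≤ κ ∧ c (S i) = S i :=
    ae_all_iff.2 fun i =>
      (Measure.tendsto_eval_ae_ae (μ := fun _ : Fin n => μ) (i := i)).eventually hsupp'
  let f : EuclideanSpace ℝ (Fin p) → EuclideanSpace ℝ (Fin p) × ℝ → ℝ := fun θ z =>
    epsLoss α ε₁ ε₂ (c z).2 ⟪(c z).1, θ⟫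
  have hf : ∀ θ, Measurable (f θ) := fun θ =>
    (continuous_epsLoss α ε₁ ε₂).measurable.comp (hc₂.prodMk (hc₁.inner measurable_const))
  have hfb : ∀ R θ, ‖θ‖ ≤ R → ∀ z, f θ z ∈ Set.Icc 0 (M * (D + ε₂) + M * (κ * R)) :=
    fun R θ hθ z => by
      refine ⟨epsLoss_nonneg hα₀.le hα₁.le _ _ _ _,
        (epsLoss_le hα₀.le hα₁.le hε' hε₂ (hcD z) _).trans ?_⟩
      gcongr
      exact (abs_real_inner_le_norm _ _).trans
        (mul_le_mul (hcκ z) hθ (norm_nonneg _) hκ0.le)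
  have hfi : ∀ θ, Integrable (f θ) μ := fun θ =>
    integrable_of_measurable_of_abs_le (hf θ) fun z => by
      rw [abs_of_nonneg (hfb _ θ le_rfl z).1]
      exact (hfb _ θ le_rfl z).2
  have htrue : ∀ θ, trueRisk α ε₁ ε₂ μ θ = ∫ z, f θ z ∂μ := fun θ =>
    integral_congr_ae <| by
      filter_upwards [hsupp'] with z hz
      simp only [f, hz.2]
  have htrueLip : ∀ θ θ', trueRisk α ε₁ ε₂ μ θ ≤ trueRisk α ε₁ ε₂ μ θ' + M * κ * ‖θ - θ'‖ :=
    fun θ θ' => by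
      have h := integral_mono (hfi θ) ((hfi θ').add (integrable_const (M * κ * ‖θ - θ'‖)))
        fun z => sub_le_iff_le_add'.1 ((le_abs_self _).trans
          (abs_epsLoss_inner_sub_le hα₀.le hα₁.le (c z).2 (hcκ z) θ θ'))
      rw [htrue, htrue]
      simp only [Pi.add_apply] at h
      rwa [integral_add (hfi θ') (integrable_const _), integral_const, probReal_univ,
        one_smul] at h
  set C : ℝ := M * (D + ε₂) + M * (κ * r) with hC
  have hC0 : 0 < C := by positivity
  set L₁ : ℝ := √(Real.log (1 / δ) / (2 * n)) with hL₁
  have hlog : 0 ≤ Real.log (1 / δ) := Real.log_nonneg ((one_le_div hδ.1).2 hδ.2.le)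
  have hL₁sq : L₁ ^ 2 = Real.log (1 / δ) / (2 * n) := Real.sq_sqrt (by positivity)
  set B : Set (Fin n → EuclideanSpace ℝ (Fin p) × ℝ) :=
    {S | 2 * r * (√n * (M * κ)) + n * C * L₁ ≤
      ⨆ t : N, ∑ i, (∫ y, f t y ∂μ - f t (S i))} with hB
  have hBδ : (Measure.pi fun _ : Fin n => μ).real B ≤ δ := by
    refine (measureReal_ciSup_sum_ge_le μ (fun t : N => hf t) hC0
      (fun t => hfb r t (mem_closedBall_zero_iff.1 (hNr t.2))) (v := fun z => M • (c z).1)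
      (hc₁.const_smul M) (by positivity) (fun z => ?_) hr0.le
      (fun t => mem_closedBall_zero_iff.1 (hNr t.2)) (fun t t' z => ?_) hn
      (by positivity)).trans (le_of_eq ?_)
    · rw [norm_smul, Real.norm_of_nonneg hM0.le]
      exact mul_le_mul_of_nonneg_left (hcκ z) hM0.le
    · refine (abs_epsLoss_sub_le hα₀.le hα₁.le _ _ _).trans_eq ?_
      rw [real_inner_smul_left, abs_mul, abs_of_pos hM0, inner_sub_right]
    · have : 2 * (n * C * L₁) ^ 2 / (n * C ^ 2) = Real.log (1 / δ) := by
        rw [mul_pow, hL₁sq]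
        field_simp
      rw [this, one_div, Real.log_inv, neg_neg, Real.exp_log hδ.1]
  have hBm : MeasurableSet B := measurableSet_le measurable_const <|
    .iSup fun t => Finset.measurable_sum _ fun i _ =>
      ((hf t).comp (measurable_pi_apply i)).const_sub _
  have hBc : ENNReal.ofReal (1 - δ) ≤ (Measure.pi fun _ : Fin n => μ) Bᶜ := by
    rw [← ofReal_measureReal, probReal_compl_eq_one_sub hBm]
    exact ENNReal.ofReal_le_ofReal (by linarith)
  refine hBc.trans (measure_mono_ae ?_)
  filter_upwards [hAmin, hsuppS] with S hmin hS hSB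
  have hSκ : ∀ i, ‖(S i).1‖ ≤ κ := fun i => (hS i).1
  have hempLip := abs_empRisk_sub_le hn hα₀.le hα₁.le (ε₁ := ε₁) (ε₂ := ε₂) hSκ
  have hAr : ‖A S‖ ≤ r := norm_le_of_isMin_add_sq (by positivity) hlam hempLip hmin
  obtain ⟨t, ht⟩ := hnet _ hAr
  have hsup : ∑ i, (∫ y, f t y ∂μ - f t (S i)) < 2 * r * (√n * (M * κ)) + n * C * L₁ :=
    (le_ciSup (f := fun t : N => ∑ i, (∫ y, f t y ∂μ - f t (S i)))
      (Set.finite_range _).bddAbove t).trans_lt (not_le.1 hSB)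
  have hsum : ∑ i, (∫ y, f t y ∂μ - f t (S i)) =
      n * (trueRisk α ε₁ ε₂ μ t - empRisk α ε₁ ε₂ S t) := by
    have : ∀ i, f t (S i) = epsLoss α ε₁ ε₂ (S i).2 ⟪(S i).1, t⟫ := fun i => by
      simp only [f, (hS i).2]
    simp only [this, Finset.sum_sub_distrib, ← htrue, empRisk]
    simp
    field_simp
  have h₁ := htrueLip (A S) t
  have h₂ := (abs_le.1 (hempLip (A S) t)).1
  have h₃ : M * κ * ‖A S - t‖ ≤ M * κ * η := mul_le_mul_of_nonneg_left ht (by positivity)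
  have h₄ : trueRisk α ε₁ ε₂ μ t - empRisk α ε₁ ε₂ S t ≤
      2 * r * (M * κ) * (1 / √n) + C * L₁ := by
    rw [hsum] at hsup
    have : n * (2 * r * (M * κ) * (1 / √n) + C * L₁) =
        2 * r * (√n * (M * κ)) + n * C * L₁ := by
      have := Real.mul_self_sqrt hn'.le
      field_simp
      linear_combination (-2 * r * M * κ) * this
    rw [← this] at hsup
    exact (lt_of_mul_lt_mul_left hsup hn'.le).le
  have hL := inv_sqrt_add_half_sqrt_log_le hδ hn
  have hL₁L : L₁ ≤ √(Real.log (2 / δ) / (2 * n)) := by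
    refine Real.sqrt_le_sqrt ?_
    have := hδ.1
    gcongr
    norm_num
  set L : ℝ := √(Real.log (2 / δ) / (2 * n)) with hLdef
  set Q : ℝ := M ^ 2 * κ ^ 2 / lam with hQ
  have hQ0 : 0 ≤ Q := by positivity
  have hMκη : 2 * (M * κ * η) = Q / n := by rw [hη, hQ]; field_simp
  have hrQ : 2 * r * (M * κ) = Q := by rw [hr, hQ]; field_simp
  have hCQ : C = M * (D + ε₂) + Q / 2 := by rw [hC, ← hrQ]; ring
  have hgoal : M ^ 2 * Xmax ^ 2 * p / (n * lam) + 2 * M ^ 2 * Xmax ^ 2 * (p / lam) * L +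
      (D + ε₂) * M * L = Q / n + Q * (2 * L) + M * (D + ε₂) * L := by
    rw [hQ, hκsq]
    field_simp
  have h₅ := mul_le_mul_of_nonneg_left hL hQ0
  have h₆ : M * (D + ε₂) * L₁ ≤ M * (D + ε₂) * L :=
    mul_le_mul_of_nonneg_left hL₁L (by positivity)
  change _ ≤ _
  rw [hgoal]
  rw [hrQ, hCQ] at h₄
  linarith
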